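/- Let n ≥ 2 and let S̃'_n be the presented group with generators z' and τ̃'_{i,j} for 0 ≤ i ≠ j ≤ n−1 and relations: z'·z' = 1; z'·τ̃'_{i,j} = τ̃'_{i,j}·z'; τ̃'_{i,j} = z'·τ̃'_{j,i}; τ̃'_{i,j}·τ̃'_{i,j} = z' for all i ≠ j; τ̃'_{i,j}·τ̃'_{k,l} = z'·τ̃'_{k,l}·τ̃'_{i,j} whenever {i,j} ∩ {k,l} = ∅; and τ̃'_{i,j}·τ̃'_{j,k}·τ̃'_{i,j} = τ̃'_{j,k}·τ̃'_{i,j}·τ̃'_{j,k} = τ̃'_{i,k} for all pairwise distinct i, j, k. Then there is a group isomorphism φ : S̃_n → S̃'_n with φ(τ̃_i) = τ̃'_{i,i+1} for 0 ≤ i ≤ n−2 and φ(z) = z', and moreover φ(τ̃_{i,j}) = τ̃'_{i,j} for all 0 ≤ i < j ≤ n−1. -/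

import Mathlib

open Equiv

/-- Generator `z` as an element of the free group. -/
def zF (n : ℕ) : FreeGroup (Fin (n-1) ⊕ Unit) := FreeGroup.of (Sum.inr ())

/-- Generator `τ̃ᵢ` as an element of the free group. -/
def tF (n : ℕ) (i : Fin (n-1)) : FreeGroup (Fin (n-1) ⊕ Unit) := FreeGroup.of (Sum.inl i)

/-- Relations of the spin extension of the symmetric group. -/
def spinRels (n : ℕ) : Set (FreeGroup (Fin (n-1) ⊕ Unit)) :=
  {zF n * zF n} ∪
  {w | ∃ i : Fin (n-1), w = zF n * tF n i * (tF n i * zF n)⁻¹} ∪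
  {w | ∃ i : Fin (n-1), w = tF n i * tF n i * (zF n)⁻¹} ∪
  {w | ∃ i j : Fin (n-1), 1 < |(i : ℤ) - (j : ℤ)| ∧ w = tF n i * tF n j * (zF n * tF n j * tF n i)⁻¹} ∪
  {w | ∃ i j : Fin (n-1), (j : ℕ) = (i : ℕ) + 1 ∧
        w = tF n i * tF n j * tF n i * (tF n j * tF n i * tF n j)⁻¹}

/-- The spin extension `S̃ₙ` of the symmetric group, as a presented group. -/
abbrev SpinSym (n : ℕ) := PresentedGroup (spinRels n)

/-- The central element `z` of `S̃ₙ`. -/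
def zt (n : ℕ) : SpinSym n := PresentedGroup.of (Sum.inr ())

/-- The generator `τ̃ᵢ` of `S̃ₙ`. -/
def tt (n : ℕ) (i : Fin (n-1)) : SpinSym n := PresentedGroup.of (Sum.inl i)

/-- `i` as an element of `Fin n`. -/
def finL (n : ℕ) (i : Fin (n-1)) : Fin n := ⟨i, by have := i.2; omega⟩

/-- `i+1` as an element of `Fin n`. -/
def finR (n : ℕ) (i : Fin (n-1)) : Fin n := ⟨(i : ℕ) + 1, by have := i.2; omega⟩

/-- `τ̃ₖ` for a natural number index, `1` out of range. -/
def ttN (n : ℕ) (k : ℕ) : SpinSym n := if h : k < n - 1 then tt n ⟨k, h⟩ else 1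

/-- For `i ≤ j`, the word `τ̃ᵢ·τ̃ᵢ₊₁⋯τ̃ⱼ₋₂·τ̃ⱼ₋₁·τ̃ⱼ₋₂⋯τ̃ᵢ₊₁·τ̃ᵢ` (equal to `1` when `i = j`). -/
def ttilCore (n i j : ℕ) : SpinSym n :=
  (((List.range' i (j - i)) ++ (List.range' i (j - 1 - i)).reverse).map (ttN n)).prod

/-- The lifted transpositions `τ̃_{i,j}`, with `τ̃_{j,i} = z·τ̃_{i,j}` for `i < j`,
and `τ̃_{k,k} = 1`. -/
def ttil (n i j : ℕ) : SpinSym n := if j < i then zt n * ttilCore n j i else ttilCore n i j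

/-- Generator `z'` of the second presentation, in the free group. -/
def zF2 (n : ℕ) : FreeGroup ({q : Fin n × Fin n // q.1 ≠ q.2} ⊕ Unit) :=
  FreeGroup.of (Sum.inr ())

/-- Generator `τ̃'_{i,j}` of the second presentation, in the free group. -/
def tF2 (n : ℕ) (i j : Fin n) (h : i ≠ j) :
    FreeGroup ({q : Fin n × Fin n // q.1 ≠ q.2} ⊕ Unit) :=
  FreeGroup.of (Sum.inl ⟨(i, j), h⟩)

/-- Relations of the second presentation of the spin extension. -/
def spinRels2 (n : ℕ) : Set (FreeGroup ({q : Fin n × Fin n // q.1 ≠ q.2} ⊕ Unit)) :=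
  {zF2 n * zF2 n} ∪
  {w | ∃ (i j : Fin n) (h : i ≠ j), w = zF2 n * tF2 n i j h * (tF2 n i j h * zF2 n)⁻¹} ∪
  {w | ∃ (i j : Fin n) (h : i ≠ j), w = tF2 n i j h * (zF2 n * tF2 n j i (Ne.symm h))⁻¹} ∪
  {w | ∃ (i j : Fin n) (h : i ≠ j), w = tF2 n i j h * tF2 n i j h * (zF2 n)⁻¹} ∪
  {w | ∃ (i j k l : Fin n) (hij : i ≠ j) (hkl : k ≠ l),
        i ≠ k ∧ i ≠ l ∧ j ≠ k ∧ j ≠ l ∧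
        w = tF2 n i j hij * tF2 n k l hkl * (zF2 n * tF2 n k l hkl * tF2 n i j hij)⁻¹} ∪
  {w | ∃ (i j k : Fin n) (hij : i ≠ j) (hjk : j ≠ k) (hik : i ≠ k),
        w = tF2 n i j hij * tF2 n j k hjk * tF2 n i j hij * (tF2 n i k hik)⁻¹} ∪
  {w | ∃ (i j k : Fin n) (hij : i ≠ j) (hjk : j ≠ k) (hik : i ≠ k),
        w = tF2 n j k hjk * tF2 n i j hij * tF2 n j k hjk * (tF2 n i k hik)⁻¹}

/-- The second presented group `S̃'ₙ`. -/
abbrev SpinSym2 (n : ℕ) := PresentedGroup (spinRels2 n)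

/-- The element `z'` of `S̃'ₙ`. -/
def zt2 (n : ℕ) : SpinSym2 n := PresentedGroup.of (Sum.inr ())

/-- The generator `τ̃'_{i,j}` of `S̃'ₙ`. -/
def tt2 (n : ℕ) (i j : Fin n) (h : i ≠ j) : SpinSym2 n :=
  PresentedGroup.of (Sum.inl ⟨(i, j), h⟩)

theorem mk_eq_mk_of_mul_inv_mem {α : Type*} {rels : Set (FreeGroup α)} {x y : FreeGroup α}
    (h : x * y⁻¹ ∈ rels) : PresentedGroup.mk rels x = PresentedGroup.mk rels y := by
  have := PresentedGroup.one_of_mem h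
  rwa [map_mul, map_inv, mul_inv_eq_one] at this

/-! ### The group `S̃ₙ` -/

theorem zt_mul_zt (n : ℕ) : zt n * zt n = 1 :=
  PresentedGroup.one_of_mem (rels := spinRels n) (x := zF n * zF n) (by simp [spinRels])

theorem zt_mul_zt_mul (n : ℕ) (x : SpinSym n) : zt n * (zt n * x) = x := by
  rw [← mul_assoc, zt_mul_zt, one_mul]

theorem zt_mul_tt (n : ℕ) (i : Fin (n-1)) : zt n * tt n i = tt n i * zt n :=
  mk_eq_mk_of_mul_inv_mem (rels := spinRels n) (x := zF n * tF n i) (y := tF n i * zF n)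
    (by simp only [spinRels, Set.mem_union]; exact .inl (.inl (.inl (.inr ⟨i, rfl⟩))))

theorem tt_mul_self (n : ℕ) (i : Fin (n-1)) : tt n i * tt n i = zt n :=
  mk_eq_mk_of_mul_inv_mem (rels := spinRels n) (x := tF n i * tF n i) (y := zF n)
    (by simp only [spinRels, Set.mem_union]; exact .inl (.inl (.inr ⟨i, rfl⟩)))

theorem tt_mul_tt_of_far (n : ℕ) (i j : Fin (n-1)) (h : 1 < |(i : ℤ) - (j : ℤ)|) :
    tt n i * tt n j = zt n * tt n j * tt n i :=
  mk_eq_mk_of_mul_inv_mem (rels := spinRels n) (x := tF n i * tF n j) (y := zF n * tF n j * tF n i)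
    (by simp only [spinRels, Set.mem_union]; exact .inl (.inr ⟨i, j, h, rfl⟩))

theorem tt_braid (n : ℕ) (i j : Fin (n-1)) (h : (j : ℕ) = (i : ℕ) + 1) :
    tt n i * tt n j * tt n i = tt n j * tt n i * tt n j :=
  mk_eq_mk_of_mul_inv_mem (rels := spinRels n) (x := tF n i * tF n j * tF n i)
    (y := tF n j * tF n i * tF n j)
    (by simp only [spinRels, Set.mem_union]; exact .inr ⟨i, j, h, rfl⟩)

theorem zt_mul_comm (n : ℕ) (x : SpinSym n) : zt n * x = x * zt n := by
  have hx : x ∈ Subgroup.closure (Set.range (PresentedGroup.of (rels := spinRels n))) := by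
    rw [PresentedGroup.closure_range_of]; trivial
  have hle : Subgroup.closure (Set.range (PresentedGroup.of (rels := spinRels n))) ≤
      Subgroup.centralizer {zt n} := by
    rw [Subgroup.closure_le]
    rintro _ ⟨i | u, rfl⟩
    · exact Subgroup.mem_centralizer_singleton_iff.2 (zt_mul_tt n i).symm
    · exact Subgroup.mem_centralizer_singleton_iff.2 rfl
  exact (Subgroup.mem_centralizer_singleton_iff.1 (hle hx)).symm

theorem mul_zt_mul (n : ℕ) (x y : SpinSym n) : x * (zt n * y) = zt n * (x * y) := by
  rw [← mul_assoc, ← zt_mul_comm, mul_assoc]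

theorem ttN_mul_self {n k : ℕ} (hk : k + 1 < n) : ttN n k * ttN n k = zt n := by
  have : k < n - 1 := by omega
  simp [ttN, this, tt_mul_self]

theorem ttN_mul_self_mul {n k : ℕ} (hk : k + 1 < n) (x : SpinSym n) :
    ttN n k * (ttN n k * x) = zt n * x := by
  rw [← mul_assoc, ttN_mul_self hk]

theorem ttN_mul_ttN_of_far {n k l : ℕ} (hk : k + 1 < n) (hl : l + 1 < n)
    (h : k + 1 < l ∨ l + 1 < k) : ttN n k * ttN n l = zt n * (ttN n l * ttN n k) := by
  have h1 : k < n - 1 := by omega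
  have h2 : l < n - 1 := by omega
  simp only [ttN, h1, h2, dif_pos, ← mul_assoc]
  apply tt_mul_tt_of_far
  simp only [lt_abs]
  omega

theorem ttN_braid {n k : ℕ} (hk : k + 2 < n) :
    ttN n (k + 1) * (ttN n k * ttN n (k + 1)) = ttN n k * (ttN n (k + 1) * ttN n k) := by
  have h1 : k < n - 1 := by omega
  have h2 : k + 1 < n - 1 := by omega
  simp only [ttN, h1, h2, dif_pos, ← mul_assoc]
  exact (tt_braid n _ _ rfl).symm

theorem ttilCore_succ (n i : ℕ) : ttilCore n i (i + 1) = ttN n i := by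
  simp [ttilCore]

theorem ttilCore_of_lt {n i j : ℕ} (h : i + 1 < j) :
    ttilCore n i j = ttN n i * ttilCore n (i + 1) j * ttN n i := by
  obtain ⟨d, rfl⟩ := Nat.exists_eq_add_of_le (show i + 2 ≤ j by omega)
  have h1 : i + 2 + d - i = d + 2 := by omega
  have h2 : i + 2 + d - 1 - i = d + 1 := by omega
  have h3 : i + 2 + d - (i + 1) = d + 1 := by omega
  have h4 : i + 2 + d - 1 - (i + 1) = d := by omega
  simp only [ttilCore, h1, h2, h3, h4]
  rw [List.range'_succ (n := d + 1), List.range'_succ (n := d) (s := i)]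
  simp [mul_assoc]

theorem ttil_of_lt {n i j : ℕ} (h : i < j) : ttil n i j = ttilCore n i j := by
  simp [ttil, h.not_gt]

theorem ttil_comm {n i j : ℕ} (h : i ≠ j) : ttil n i j = zt n * ttil n j i := by
  rcases h.lt_or_gt with h | h <;> simp [ttil, h, h.not_gt, zt_mul_zt_mul]

theorem ttN_mul_ttilCore_mul_ttN {n : ℕ} {i j k : ℕ} (hij : i < j) (hj : j < n) (hk : k + 1 < n) :
    ttN n k * ttilCore n i j * ttN n k =
      ttil n (Equiv.swap k (k + 1) i) (Equiv.swap k (k + 1) j) := by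
  induction hd : j - i using Nat.strong_induction_on generalizing i k with
  | _ d ih =>
    rcases eq_or_ne k i with rfl | hki
    · rw [Equiv.swap_apply_left]
      rcases eq_or_ne j (k + 1) with rfl | hjk
      · rw [Equiv.swap_apply_right, ttil_comm (by omega), ttil_of_lt hij, ttilCore_succ,
          ttN_mul_self hk]
      · rw [Equiv.swap_apply_of_ne_of_ne (by omega) hjk, ttil_of_lt (by omega),
          ttilCore_of_lt (by omega)]
        simp only [mul_assoc, ttN_mul_self hk, ttN_mul_self_mul hk, ← zt_mul_comm, zt_mul_zt_mul]
    · rcases eq_or_ne (k + 1) i with rfl | hki'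
      · rw [Equiv.swap_apply_right, Equiv.swap_apply_of_ne_of_ne (by omega) (by omega),
          ttil_of_lt (by omega), ttilCore_of_lt (i := k) (by omega)]
      · have hlt : i < Equiv.swap k (k + 1) j := by grind
        rw [Equiv.swap_apply_of_ne_of_ne hki.symm hki'.symm, ttil_of_lt hlt]
        rcases eq_or_ne k (i + 1) with rfl | hk1
        · have hb := ttN_braid hk
          rcases eq_or_ne j (i + 1) with rfl | hj1
          · rw [Equiv.swap_apply_left, ttilCore_succ, ttilCore_of_lt (by omega), ttilCore_succ]
            simpa only [mul_assoc] using hb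
          rcases eq_or_ne j (i + 1 + 1) with rfl | hj2
          · rw [Equiv.swap_apply_right, ttilCore_succ, ttilCore_of_lt (by omega), ttilCore_succ]
            simp only [mul_assoc]
            rw [hb, ttN_mul_self_mul (by omega), mul_zt_mul, ttN_mul_self_mul hk, zt_mul_zt_mul]
          · have hD : ttN n i * ttilCore n (i + 1 + 1) j * ttN n i = ttilCore n (i + 1 + 1) j := by
              rw [ih (j - (i + 1 + 1)) (by omega) (by omega) (by omega) rfl,
                Equiv.swap_apply_of_ne_of_ne (by omega) (by omega),
                Equiv.swap_apply_of_ne_of_ne (by omega) (by omega), ttil_of_lt (by omega)]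
            rw [Equiv.swap_apply_of_ne_of_ne hj1 hj2, ttilCore_of_lt (i := i) (by omega),
              ttilCore_of_lt (i := i + 1) (by omega)]
            calc
              _ = ttN n (i + 1) * (ttN n i * ttN n (i + 1)) * ttilCore n (i + 1 + 1) j *
                  (ttN n (i + 1) * (ttN n i * ttN n (i + 1))) := by simp only [mul_assoc]
              _ = ttN n i * ttN n (i + 1) * (ttN n i * ttilCore n (i + 1 + 1) j * ttN n i) *
                  ttN n (i + 1) * ttN n i := by rw [hb]; simp only [mul_assoc]
              _ = _ := by rw [hD]; simp only [mul_assoc]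
        · have hfar := ttN_mul_ttN_of_far (n := n) (k := k) (l := i) hk (by omega) (by omega)
          have hfar' := ttN_mul_ttN_of_far (n := n) (k := i) (l := k) (by omega) hk (by omega)
          rcases eq_or_ne j (i + 1) with rfl | hj1
          · rw [Equiv.swap_apply_of_ne_of_ne hk1.symm (by omega), ttilCore_succ, hfar, mul_assoc,
              mul_assoc, ttN_mul_self hk, ← zt_mul_comm, zt_mul_zt_mul]
          · have hlt' : i + 1 < Equiv.swap k (k + 1) j := by grind
            have hC := ih (j - (i + 1)) (by omega) (i := i + 1) (by omega) hk rfl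
            rw [Equiv.swap_apply_of_ne_of_ne hk1.symm (by omega), ttil_of_lt hlt'] at hC
            rw [ttilCore_of_lt (i := i) (by omega), ttilCore_of_lt hlt', ← hC]
            calc
              _ = ttN n k * ttN n i * ttilCore n (i + 1) j * (ttN n i * ttN n k) := by
                simp only [mul_assoc]
              _ = zt n * (ttN n i * ttN n k) * ttilCore n (i + 1) j *
                  (zt n * (ttN n k * ttN n i)) := by rw [← hfar, ← hfar']
              _ = _ := by simp only [mul_assoc, mul_zt_mul, zt_mul_zt_mul]

theorem ttN_mul_ttil_mul_ttN {n i j k : ℕ} (hij : i ≠ j) (hi : i < n) (hj : j < n)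
    (hk : k + 1 < n) :
    ttN n k * ttil n i j * ttN n k =
      ttil n (Equiv.swap k (k + 1) i) (Equiv.swap k (k + 1) j) := by
  rcases hij.lt_or_gt with h | h
  · rw [ttil_of_lt h, ttN_mul_ttilCore_mul_ttN h hj hk]
  · rw [ttil_comm hij, ttil_of_lt h, mul_zt_mul, mul_assoc, ttN_mul_ttilCore_mul_ttN h hi hk,
      ← ttil_comm ((Equiv.injective _).ne hij)]

theorem ttilCore_mul_ttil_mul_ttilCore {n a b i j : ℕ} (hab : a < b) (hb : b < n)
    (hij : i ≠ j) (hi : i < n) (hj : j < n) :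
    ttilCore n a b * ttil n i j * ttilCore n a b =
      ttil n (Equiv.swap a b i) (Equiv.swap a b j) := by
  induction hd : b - a generalizing a i j with
  | zero => omega
  | succ d ih =>
    rcases eq_or_ne b (a + 1) with rfl | hb1
    · rw [ttilCore_succ, ttN_mul_ttil_mul_ttN hij hi hj hb]
    · have hlt : ∀ {a b x : ℕ}, a < n → b < n → x < n → Equiv.swap a b x < n := by
        intro a b x _ _ _; grind
      have hne : ∀ {a b x y : ℕ}, x ≠ y → Equiv.swap a b x ≠ Equiv.swap a b y :=
        fun h => (Equiv.injective _).ne h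
      have hswap : ∀ x, Equiv.swap a (a + 1) (Equiv.swap (a + 1) b (Equiv.swap a (a + 1) x)) =
          Equiv.swap a b x := by intro x; grind
      rw [ttilCore_of_lt (by omega)]
      calc
        _ = ttN n a * (ttilCore n (a + 1) b * (ttN n a * ttil n i j * ttN n a) *
            ttilCore n (a + 1) b) * ttN n a := by simp only [mul_assoc]
        _ = _ := by
          rw [ttN_mul_ttil_mul_ttN hij hi hj (by omega),
            ih (by omega) (hne hij) (hlt (by omega) (by omega) hi) (hlt (by omega) (by omega) hj)
              (by omega),
            ttN_mul_ttil_mul_ttN (hne (hne hij))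
              (hlt (by omega) hb (hlt (by omega) (by omega) hi))
              (hlt (by omega) hb (hlt (by omega) (by omega) hj)) (by omega), hswap, hswap]

theorem ttil_mul_ttil_mul_ttil {n a b i j : ℕ} (hab : a ≠ b) (ha : a < n) (hb : b < n)
    (hij : i ≠ j) (hi : i < n) (hj : j < n) :
    ttil n a b * ttil n i j * ttil n a b = ttil n (Equiv.swap a b i) (Equiv.swap a b j) := by
  rcases hab.lt_or_gt with h | h
  · rw [ttil_of_lt h, ttilCore_mul_ttil_mul_ttilCore h hb hij hi hj]
  · rw [ttil_comm hab, ttil_of_lt h, mul_zt_mul, mul_assoc, mul_assoc, zt_mul_zt_mul, ← mul_assoc,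
      ttilCore_mul_ttil_mul_ttilCore h ha hij hi hj, Equiv.swap_comm]

theorem ttilCore_mul_self {n a b : ℕ} (hab : a < b) (hb : b < n) :
    ttilCore n a b * ttilCore n a b = zt n := by
  induction hd : b - a generalizing a with
  | zero => omega
  | succ d ih =>
    rcases eq_or_ne b (a + 1) with rfl | hb1
    · rw [ttilCore_succ, ttN_mul_self hb]
    · rw [ttilCore_of_lt (by omega)]
      calc
        _ = ttN n a * (ttilCore n (a + 1) b * (ttN n a * ttN n a * ttilCore n (a + 1) b)) *
            ttN n a := by simp only [mul_assoc]
        _ = zt n := by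
          rw [ttN_mul_self (by omega), mul_zt_mul, ih (by omega) (by omega), zt_mul_zt, mul_one,
            ttN_mul_self (by omega)]

theorem ttil_mul_self {n a b : ℕ} (hab : a ≠ b) (ha : a < n) (hb : b < n) :
    ttil n a b * ttil n a b = zt n := by
  rcases hab.lt_or_gt with h | h
  · rw [ttil_of_lt h, ttilCore_mul_self h hb]
  · rw [ttil_comm hab, ttil_of_lt h, mul_zt_mul, mul_assoc, zt_mul_zt_mul, ttilCore_mul_self h ha]

theorem ttil_mul_ttil_of_disjoint {n i j k l : ℕ} (hij : i ≠ j) (hi : i < n) (hj : j < n)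
    (hkl : k ≠ l) (hk : k < n) (hl : l < n) (hik : i ≠ k) (hil : i ≠ l) (hjk : j ≠ k)
    (hjl : j ≠ l) : ttil n i j * ttil n k l = zt n * ttil n k l * ttil n i j := by
  have h := ttil_mul_ttil_mul_ttil hij hi hj hkl hk hl
  rw [Equiv.swap_apply_of_ne_of_ne hik.symm hjk.symm,
    Equiv.swap_apply_of_ne_of_ne hil.symm hjl.symm] at h
  nth_rewrite 2 [← h]
  rw [mul_assoc, mul_assoc _ (ttil n i j) (ttil n i j), ttil_mul_self hij hi hj, ← zt_mul_comm,
    zt_mul_zt_mul]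

/-! ### The second presented group -/

theorem zt2_mul_zt2 (n : ℕ) : zt2 n * zt2 n = 1 :=
  PresentedGroup.one_of_mem (rels := spinRels2 n) (x := zF2 n * zF2 n) (by simp [spinRels2])

theorem zt2_mul_tt2 (n : ℕ) (i j : Fin n) (h : i ≠ j) :
    zt2 n * tt2 n i j h = tt2 n i j h * zt2 n :=
  mk_eq_mk_of_mul_inv_mem (rels := spinRels2 n) (x := zF2 n * tF2 n i j h)
    (y := tF2 n i j h * zF2 n)
    (by
      simp only [spinRels2, Set.mem_union]
      exact .inl (.inl (.inl (.inl (.inl (.inr ⟨i, j, h, rfl⟩))))))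

theorem tt2_comm (n : ℕ) (i j : Fin n) (h : i ≠ j) :
    tt2 n i j h = zt2 n * tt2 n j i h.symm :=
  mk_eq_mk_of_mul_inv_mem (rels := spinRels2 n) (x := tF2 n i j h) (y := zF2 n * tF2 n j i h.symm)
    (by
      simp only [spinRels2, Set.mem_union]
      exact .inl (.inl (.inl (.inl (.inr ⟨i, j, h, rfl⟩)))))

theorem tt2_mul_self (n : ℕ) (i j : Fin n) (h : i ≠ j) :
    tt2 n i j h * tt2 n i j h = zt2 n :=
  mk_eq_mk_of_mul_inv_mem (rels := spinRels2 n) (x := tF2 n i j h * tF2 n i j h) (y := zF2 n)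
    (by
      simp only [spinRels2, Set.mem_union]
      exact .inl (.inl (.inl (.inr ⟨i, j, h, rfl⟩))))

theorem tt2_mul_tt2_of_disjoint (n : ℕ) (i j k l : Fin n) (hij : i ≠ j) (hkl : k ≠ l)
    (hik : i ≠ k) (hil : i ≠ l) (hjk : j ≠ k) (hjl : j ≠ l) :
    tt2 n i j hij * tt2 n k l hkl = zt2 n * tt2 n k l hkl * tt2 n i j hij :=
  mk_eq_mk_of_mul_inv_mem (rels := spinRels2 n) (x := tF2 n i j hij * tF2 n k l hkl)
    (y := zF2 n * tF2 n k l hkl * tF2 n i j hij)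
    (by
      simp only [spinRels2, Set.mem_union]
      exact .inl (.inl (.inr ⟨i, j, k, l, hij, hkl, hik, hil, hjk, hjl, rfl⟩)))

theorem tt2_braid_left (n : ℕ) (i j k : Fin n) (hij : i ≠ j) (hjk : j ≠ k) (hik : i ≠ k) :
    tt2 n i j hij * tt2 n j k hjk * tt2 n i j hij = tt2 n i k hik :=
  mk_eq_mk_of_mul_inv_mem (rels := spinRels2 n) (x := tF2 n i j hij * tF2 n j k hjk * tF2 n i j hij)
    (y := tF2 n i k hik)
    (by
      simp only [spinRels2, Set.mem_union]
      exact .inl (.inr ⟨i, j, k, hij, hjk, hik, rfl⟩))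

theorem tt2_braid_right (n : ℕ) (i j k : Fin n) (hij : i ≠ j) (hjk : j ≠ k) (hik : i ≠ k) :
    tt2 n j k hjk * tt2 n i j hij * tt2 n j k hjk = tt2 n i k hik :=
  mk_eq_mk_of_mul_inv_mem (rels := spinRels2 n) (x := tF2 n j k hjk * tF2 n i j hij * tF2 n j k hjk)
    (y := tF2 n i k hik)
    (by
      simp only [spinRels2, Set.mem_union]
      exact .inr ⟨i, j, k, hij, hjk, hik, rfl⟩)

/-! ### The two homomorphisms -/

theorem finL_ne_finR (n : ℕ) (i : Fin (n-1)) : finL n i ≠ finR n i := by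
  simp [finL, finR]

/-- The images in `S̃'ₙ` of the generators of `S̃ₙ`. -/
def genToSpinSym2 (n : ℕ) : Fin (n-1) ⊕ Unit → SpinSym2 n :=
  Sum.elim (fun i => tt2 n (finL n i) (finR n i) (finL_ne_finR n i)) fun _ => zt2 n

theorem lift_genToSpinSym2_eq_one (n : ℕ) :
    ∀ w ∈ spinRels n, FreeGroup.lift (genToSpinSym2 n) w = 1 := by
  rintro _ ((((rfl | ⟨i, rfl⟩) | ⟨i, rfl⟩) | ⟨i, j, hij, rfl⟩) | ⟨i, j, hij, rfl⟩) <;>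
    simp only [genToSpinSym2, zF, tF, map_mul, map_inv, FreeGroup.lift_apply_of, Sum.elim_inl,
      Sum.elim_inr, mul_inv_eq_one]
  · exact zt2_mul_zt2 n
  · exact zt2_mul_tt2 n _ _ _
  · exact tt2_mul_self n _ _ _
  · rw [lt_abs] at hij
    apply tt2_mul_tt2_of_disjoint <;> simp only [finL, finR, ne_eq, Fin.mk.injEq] <;> omega
  · obtain ⟨j, hj⟩ := j
    obtain rfl : j = i + 1 := hij
    have hik : finL n i ≠ finR n ⟨i + 1, hj⟩ := by
      simp only [finL, finR, ne_eq, Fin.mk.injEq]; omega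
    exact (tt2_braid_left n _ _ _ (finL_ne_finR n i) (finL_ne_finR n ⟨i + 1, hj⟩) hik).trans
      (tt2_braid_right n _ _ _ (finL_ne_finR n i) (finL_ne_finR n ⟨i + 1, hj⟩) hik).symm

/-- The homomorphism `S̃ₙ → S̃'ₙ` with `z ↦ z'` and `τ̃ᵢ ↦ τ̃'_{i,i+1}`. -/
def toSpinSym2 (n : ℕ) : SpinSym n →* SpinSym2 n :=
  PresentedGroup.toGroup (lift_genToSpinSym2_eq_one n)

theorem toSpinSym2_tt (n : ℕ) (i : Fin (n-1)) :
    toSpinSym2 n (tt n i) = tt2 n (finL n i) (finR n i) (finL_ne_finR n i) :=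
  PresentedGroup.toGroup.of _

theorem toSpinSym2_zt (n : ℕ) : toSpinSym2 n (zt n) = zt2 n :=
  PresentedGroup.toGroup.of _

theorem toSpinSym2_ttN {n k : ℕ} (hk : k + 1 < n) :
    toSpinSym2 n (ttN n k) = tt2 n ⟨k, k.lt_succ_self.trans hk⟩ ⟨k + 1, hk⟩
      (Fin.ne_of_val_ne k.lt_succ_self.ne) := by
  rw [ttN, dif_pos (by omega), toSpinSym2_tt]
  rfl

theorem toSpinSym2_ttilCore {n i j : ℕ} (hij : i < j) (hj : j < n) :
    toSpinSym2 n (ttilCore n i j) =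
      tt2 n ⟨i, hij.trans hj⟩ ⟨j, hj⟩ (Fin.ne_of_val_ne hij.ne) := by
  induction hd : j - i generalizing i with
  | zero => omega
  | succ d ih =>
    rcases eq_or_ne j (i + 1) with rfl | hj1
    · rw [ttilCore_succ, toSpinSym2_ttN hj]
    · rw [ttilCore_of_lt (by omega), map_mul, map_mul, toSpinSym2_ttN (by omega),
        ih (by omega) (by omega), tt2_braid_left]

theorem toSpinSym2_ttil {n : ℕ} {i j : Fin n} (hij : i ≠ j) :
    toSpinSym2 n (ttil n i j) = tt2 n i j hij := by
  rcases hij.lt_or_gt with h | h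
  · rw [ttil_of_lt h, toSpinSym2_ttilCore h j.2]
  · rw [ttil_comm (Fin.val_ne_of_ne hij), ttil_of_lt h, map_mul, toSpinSym2_zt,
      toSpinSym2_ttilCore h i.2, tt2_comm n i j]

/-- The images in `S̃ₙ` of the generators of `S̃'ₙ`. -/
def genOfSpinSym2 (n : ℕ) : {q : Fin n × Fin n // q.1 ≠ q.2} ⊕ Unit → SpinSym n :=
  Sum.elim (fun q => ttil n q.1.1 q.1.2) fun _ => zt n

theorem lift_genOfSpinSym2_eq_one (n : ℕ) :
    ∀ w ∈ spinRels2 n, FreeGroup.lift (genOfSpinSym2 n) w = 1 := by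
  rintro _ ((((((rfl | ⟨i, j, h, rfl⟩) | ⟨i, j, h, rfl⟩) | ⟨i, j, h, rfl⟩) |
    ⟨i, j, k, l, hij, hkl, hik, hil, hjk, hjl, rfl⟩) | ⟨i, j, k, hij, hjk, hik, rfl⟩) |
    ⟨i, j, k, hij, hjk, hik, rfl⟩) <;>
    simp only [genOfSpinSym2, zF2, tF2, map_mul, map_inv, FreeGroup.lift_apply_of, Sum.elim_inl,
      Sum.elim_inr, mul_inv_eq_one]
  · exact zt_mul_zt n
  · exact zt_mul_comm n _
  · exact ttil_comm (Fin.val_ne_of_ne h)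
  · exact ttil_mul_self (Fin.val_ne_of_ne h) i.2 j.2
  · exact ttil_mul_ttil_of_disjoint (Fin.val_ne_of_ne hij) i.2 j.2 (Fin.val_ne_of_ne hkl) k.2 l.2
      (Fin.val_ne_of_ne hik) (Fin.val_ne_of_ne hil) (Fin.val_ne_of_ne hjk) (Fin.val_ne_of_ne hjl)
  · rw [ttil_mul_ttil_mul_ttil (Fin.val_ne_of_ne hij) i.2 j.2 (Fin.val_ne_of_ne hjk) j.2 k.2,
      Equiv.swap_apply_right,
      Equiv.swap_apply_of_ne_of_ne (Fin.val_ne_of_ne hik.symm) (Fin.val_ne_of_ne hjk.symm)]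
  · rw [ttil_mul_ttil_mul_ttil (Fin.val_ne_of_ne hjk) j.2 k.2 (Fin.val_ne_of_ne hij) i.2 j.2,
      Equiv.swap_apply_left,
      Equiv.swap_apply_of_ne_of_ne (Fin.val_ne_of_ne hij) (Fin.val_ne_of_ne hik)]

/-- The homomorphism `S̃'ₙ → S̃ₙ` with `τ̃'_{i,j} ↦ τ̃_{i,j}` and `z' ↦ z`. -/
def ofSpinSym2 (n : ℕ) : SpinSym2 n →* SpinSym n :=
  PresentedGroup.toGroup (lift_genOfSpinSym2_eq_one n)

theorem ofSpinSym2_tt2 (n : ℕ) (i j : Fin n) (h : i ≠ j) :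
    ofSpinSym2 n (tt2 n i j h) = ttil n i j :=
  PresentedGroup.toGroup.of _

theorem ofSpinSym2_zt2 (n : ℕ) : ofSpinSym2 n (zt2 n) = zt n :=
  PresentedGroup.toGroup.of _

theorem ofSpinSym2_comp_toSpinSym2 (n : ℕ) :
    (ofSpinSym2 n).comp (toSpinSym2 n) = MonoidHom.id _ := by
  refine PresentedGroup.ext ?_
  rintro (i | u)
  · change ofSpinSym2 n (toSpinSym2 n (tt n i)) = tt n i
    rw [toSpinSym2_tt, ofSpinSym2_tt2]
    change ttil n i (i + 1) = tt n i
    rw [ttil_of_lt (by omega), ttilCore_succ, ttN, dif_pos i.2]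
  · change ofSpinSym2 n (toSpinSym2 n (zt n)) = zt n
    rw [toSpinSym2_zt, ofSpinSym2_zt2]

theorem toSpinSym2_comp_ofSpinSym2 (n : ℕ) :
    (toSpinSym2 n).comp (ofSpinSym2 n) = MonoidHom.id _ := by
  refine PresentedGroup.ext ?_
  rintro (⟨⟨i, j⟩, h⟩ | u)
  · change toSpinSym2 n (ofSpinSym2 n (tt2 n i j h)) = tt2 n i j h
    rw [ofSpinSym2_tt2, toSpinSym2_ttil h]
  · change toSpinSym2 n (ofSpinSym2 n (zt2 n)) = zt2 n
    rw [ofSpinSym2_zt2, toSpinSym2_zt]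

theorem two_presentations (n : ℕ) (hn : 2 ≤ n) :
    ∃ φ : SpinSym n ≃* SpinSym2 n,
      (∀ i : Fin (n-1), φ (tt n i) = tt2 n (finL n i) (finR n i)
          (by simp only [finL, finR, ne_eq, Fin.mk.injEq]; omega)) ∧
      φ (zt n) = zt2 n ∧
      ∀ i j : Fin n, (h : i < j) →
        φ (ttil n i.val j.val) = tt2 n i j (Fin.ne_of_lt h) := by
  exact ⟨MonoidHom.toMulEquiv _ _ (ofSpinSym2_comp_toSpinSym2 n) (toSpinSym2_comp_ofSpinSym2 n),
    toSpinSym2_tt n, toSpinSym2_zt n, fun _ _ h => toSpinSym2_ttil h.ne⟩
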